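/- If ĉ is an s-recurrent configuration, then the chip configuration c̄ + (deg⁺(s)·r(s))·δ_s is a recurrent configuration in the sinkless model, where r is the primitive period vector of G. -/

import Mathlib

open Finset Polynomial

namespace SandpileBM

variable {V E : Type} [Fintype V] [DecidableEq V] [Fintype E] [DecidableEq E]

/-- The number of edges from `v` to `w` in the multigraph given by `src`, `tgt`. -/
def numEdges (src tgt : E → V) (v w : V) : ℕ :=
  (Finset.univ.filter fun e => src e = v ∧ tgt e = w).card

/-- The out-degree of a vertex. -/
def outdeg (src : E → V) (v : V) : ℕ :=
  (Finset.univ.filter fun e => src e = v).card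

/-- The in-degree of a vertex. -/
def indeg (tgt : E → V) (v : V) : ℕ :=
  (Finset.univ.filter fun e => tgt e = v).card

/-- The digraph is strongly connected: any vertex is reachable from any other by
a directed path. -/
def StronglyConnected (src tgt : E → V) : Prop :=
  ∀ v w : V, Relation.ReflTransGen (fun a b => ∃ e : E, src e = a ∧ tgt e = b) v w

/-- Result of firing the vertex `v` on the chip configuration `c` (sinkless model). -/
def fire (src tgt : E → V) (c : V → ℕ) (v : V) : V → ℕ :=
  fun w => c w + numEdges src tgt v w - (if w = v then outdeg src v else 0)

/-- One legal firing move in the sinkless model. -/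
def FireStep (src tgt : E → V) (c d : V → ℕ) : Prop :=
  ∃ v : V, outdeg src v ≤ c v ∧ d = fire src tgt c v

/-- `Reach c d`: `d` is obtained from `c` by a finite sequence of legal firing moves. -/
def Reach (src tgt : E → V) : (V → ℕ) → (V → ℕ) → Prop :=
  Relation.ReflTransGen (FireStep src tgt)

/-- Stability of a chip configuration. -/
def Stable (src : E → V) (c : V → ℕ) : Prop :=
  ∀ v : V, c v < outdeg src v

/-- A chip configuration is recurrent if it is not stable and every configuration
accessible from it can reach it back. -/
def Recurrent (src tgt : E → V) (c : V → ℕ) : Prop :=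
  ¬ Stable src c ∧ ∀ d : V → ℕ, Reach src tgt c d → Reach src tgt d c

/-- Level (total number of chips) of a chip configuration. -/
def lvl (c : V → ℕ) : ℕ := ∑ v : V, c v

/-- Indicator function of the vertex `s`. -/
def deltaS (s : V) : V → ℕ := fun v => if v = s then 1 else 0

/-- Result of firing the vertex `v` on an `s`-configuration. -/
def sfire (src tgt : E → V) (s : V) (c : {v : V // v ≠ s} → ℕ) (v : {v : V // v ≠ s}) :
    {v : V // v ≠ s} → ℕ :=
  fun w => c w + numEdges src tgt v.1 w.1 - (if w = v then outdeg src v.1 else 0)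

/-- One legal s-firing move. -/
def SFireStep (src tgt : E → V) (s : V) (c d : {v : V // v ≠ s} → ℕ) : Prop :=
  ∃ v : {v : V // v ≠ s}, outdeg src v.1 ≤ c v ∧ d = sfire src tgt s c v

/-- `SReach c d`: `d` is obtained from `c` by a finite sequence of legal s-firing moves. -/
def SReach (src tgt : E → V) (s : V) :
    ({v : V // v ≠ s} → ℕ) → ({v : V // v ≠ s} → ℕ) → Prop :=
  Relation.ReflTransGen (SFireStep src tgt s)

/-- Stability of an `s`-configuration. -/
def SStable (src : E → V) (s : V) (c : {v : V // v ≠ s} → ℕ) : Prop :=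
  ∀ v : {v : V // v ≠ s}, c v < outdeg src v.1

/-- The stabilization `c°` of an `s`-configuration: the (for strongly connected digraphs,
unique) stable `s`-configuration reachable from `c` by legal s-firing moves. -/
noncomputable def stab (src tgt : E → V) (s : V) (c : {v : V // v ≠ s} → ℕ) :
    {v : V // v ≠ s} → ℕ :=
  Classical.epsilon fun d => SReach src tgt s c d ∧ SStable src s d

/-- An `s`-configuration `c` is s-recurrent if every `s`-configuration can be completed
to one whose stabilization is `c`. -/
def SRecurrent (src tgt : E → V) (s : V) (c : {v : V // v ≠ s} → ℕ) : Prop :=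
  ∀ c₁ : {v : V // v ≠ s} → ℕ, ∃ c₂ : {v : V // v ≠ s} → ℕ,
    stab src tgt s (c₁ + c₂) = c

/-- `β_s`, recording the number of edges from `s` to each other vertex. -/
def betaS (src tgt : E → V) (s : V) : {v : V // v ≠ s} → ℕ :=
  fun v => numEdges src tgt s v.1

/-- The relation `~_s` on s-recurrent configurations: `d = (c + k·β_s)°` for some `k`. -/
def SEquiv (src tgt : E → V) (s : V) (c d : {v : V // v ≠ s} → ℕ) : Prop :=
  ∃ k : ℕ, stab src tgt s (c + k • betaS src tgt s) = d

/-- Restriction of a chip configuration to `V ∖ {s}`. -/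
def restrictS (s : V) (c : V → ℕ) : {v : V // v ≠ s} → ℕ := fun v => c v.1

/-- Extension `c̄` of an `s`-configuration by `0` at `s`. -/
def extendS (s : V) (c : {v : V // v ≠ s} → ℕ) : V → ℕ :=
  fun v => if h : v = s then 0 else c ⟨v, h⟩

/-- The s-index `χ(c)`: the least `k` such that `c̄ + k·δ_s` is recurrent. -/
noncomputable def sIndex (src tgt : E → V) (s : V) (c : {v : V // v ≠ s} → ℕ) : ℕ :=
  sInf {k : ℕ | Recurrent src tgt (extendS s c + k • deltaS s)}

/-- `φ(c) := c̄ + χ(c)·δ_s`. -/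
noncomputable def phi (src tgt : E → V) (s : V) (c : {v : V // v ≠ s} → ℕ) : V → ℕ :=
  extendS s c + sIndex src tgt s c • deltaS s

/-- The s-level `slvl(c) := χ(c) + Σ_{v ≠ s} c(v)`. -/
noncomputable def slvl (src tgt : E → V) (s : V) (c : {v : V // v ≠ s} → ℕ) : ℕ :=
  sIndex src tgt s c + ∑ v : {v : V // v ≠ s}, c v

/-- The d-level `dlvl(c) := deg⁺(s) + Σ_{v ≠ s} c(v)`. -/
def dlvl (src : E → V) (s : V) (c : {v : V // v ≠ s} → ℕ) : ℕ :=
  outdeg src s + ∑ v : {v : V // v ≠ s}, c v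

/-- The set (as a type) of recurrent chip configurations. -/
abbrev RecL (src tgt : E → V) := {c : V → ℕ // Recurrent src tgt c}

/-- The setoid on recurrent configurations generated by the relation `~` (i.e. `⤳`). -/
def recLSetoid (src tgt : E → V) : Setoid (RecL src tgt) :=
  Relation.EqvGen.setoid fun a b => Reach src tgt a.1 b.1

/-- The set of `~`-classes of recurrent configurations. -/
abbrev RecLQuot (src tgt : E → V) := Quotient (recLSetoid src tgt)

/-- The set (as a type) of s-recurrent configurations. -/
abbrev RecS (src tgt : E → V) (s : V) := {c : {v : V // v ≠ s} → ℕ // SRecurrent src tgt s c}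

/-- The setoid on s-recurrent configurations generated by the relation `~_s`. -/
def recSSetoid (src tgt : E → V) (s : V) : Setoid (RecS src tgt s) :=
  Relation.EqvGen.setoid fun a b => SEquiv src tgt s a.1 b.1

/-- The set of `~_s`-classes of s-recurrent configurations. -/
abbrev RecSQuot (src tgt : E → V) (s : V) := Quotient (recSSetoid src tgt s)

/-- The level of a `~`-class of recurrent configurations (level is constant on classes). -/
noncomputable def lvlClass (src tgt : E → V) (q : RecLQuot src tgt) : ℕ :=
  sSup ((fun c : RecL src tgt => lvl c.1) '' {c | Quotient.mk (recLSetoid src tgt) c = q})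

/-- The s-level of a `~_s`-class (s-level is constant on classes). -/
noncomputable def slvlClass (src tgt : E → V) (s : V) (q : RecSQuot src tgt s) : ℕ :=
  sSup ((fun c : RecS src tgt s => slvl src tgt s c.1) ''
    {c | Quotient.mk (recSSetoid src tgt s) c = q})

/-- The d-level of a `~_s`-class: the maximum d-level over the class. -/
noncomputable def dlvlClass (src tgt : E → V) (s : V) (q : RecSQuot src tgt s) : ℕ :=
  sSup ((fun c : RecS src tgt s => dlvl src s c.1) ''
    {c | Quotient.mk (recSSetoid src tgt s) c = q})

/-- The Biggs–Merino polynomial `B(G,s;y) = Σ_{[c] ∈ Rec(G,s)/~_s} y^{dlvl([c])}`. -/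
noncomputable def BM (src tgt : E → V) (s : V) : Polynomial ℤ :=
  ∑ᶠ q : RecSQuot src tgt s, X ^ dlvlClass src tgt s q

/-- `LegalSeq l c d`: firing the vertices in the list `l` in order is a sequence of
legal firing moves transforming `c` into `d` (sinkless model). -/
def LegalSeq (src tgt : E → V) : List V → (V → ℕ) → (V → ℕ) → Prop
  | [], c, d => d = c
  | v :: l, c, d => outdeg src v ≤ c v ∧ LegalSeq src tgt l (fire src tgt c v) d

/-- `SLegalSeq l c d`: firing the vertices in the list `l` in order is a sequence of
legal s-firing moves transforming `c` into `d`. -/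
def SLegalSeq (src tgt : E → V) (s : V) :
    List {v : V // v ≠ s} → ({v : V // v ≠ s} → ℕ) → ({v : V // v ≠ s} → ℕ) → Prop
  | [], c, d => d = c
  | v :: l, c, d => outdeg src v.1 ≤ c v ∧ SLegalSeq src tgt s l (sfire src tgt s c v) d

/-- The configuration obtained from `c` after firing the vertices of `l` in order. -/
def iterFire (src tgt : E → V) (c : V → ℕ) (l : List V) : V → ℕ :=
  l.foldl (fire src tgt) c

/-- The Laplacian of the digraph applied to an integer vector:
`(Δq)(v) = deg⁺(v)·q(v) − Σ_w A(w,v)·q(w)`. -/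
def lapApply (src tgt : E → V) (q : V → ℤ) : V → ℤ :=
  fun v => (outdeg src v : ℤ) * q v - ∑ w : V, (numEdges src tgt w v : ℤ) * q w

/-- `r` is the primitive period vector of the digraph: it has positive entries with
gcd `1`, lies in the kernel of the Laplacian, and generates this kernel. -/
def IsPeriodVector (src tgt : E → V) (r : V → ℕ) : Prop :=
  (∀ v : V, 0 < r v) ∧ Finset.univ.gcd r = 1 ∧
    lapApply src tgt (fun v => (r v : ℤ)) = 0 ∧
    ∀ q : V → ℤ, lapApply src tgt q = 0 → ∃ k : ℤ, q = k • fun v => (r v : ℤ)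

/-- The Laplacian matrix of the digraph. -/
def lapMatrix (src tgt : E → V) : Matrix V V ℤ :=
  Matrix.of fun v w =>
    if v = w then (outdeg src v : ℤ) - numEdges src tgt v v
    else -(numEdges src tgt w v : ℤ)

/-- The determinant of the reduced Laplacian obtained by deleting the row and
column indexed by `v`. -/
def reducedLapDet (src tgt : E → V) (v : V) : ℤ :=
  (((lapMatrix src tgt).submatrix (fun a : {w : V // w ≠ v} => a.1)
    (fun a : {w : V // w ≠ v} => a.1)).det)

/-- The period constant `α := gcd_{v ∈ V} det Δ_v`. -/
def periodConstant (src tgt : E → V) : ℤ :=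
  Finset.univ.gcd (reducedLapDet src tgt)

/-- `IsWalk l a b`: the list of edges `l` forms a directed walk from `a` to `b`. -/
def IsWalk (src tgt : E → V) : List E → V → V → Prop
  | [], a, b => a = b
  | e :: l, a, b => src e = a ∧ IsWalk src tgt l (tgt e) b

/-- `IsPath l a b`: the list of edges `l` forms a directed path from `a` to `b`:
all visited vertices are distinct (except that the final vertex is allowed to
coincide with the starting vertex). -/
def IsPath (src tgt : E → V) (l : List E) (a b : V) : Prop :=
  IsWalk src tgt l a b ∧ (l.map tgt).Nodup ∧ a ∉ (l.map tgt).dropLast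

/-- `T` is an arborescence rooted at `s`: for every vertex `v` there is a unique
directed path from `s` to `v` using only edges of `T`. -/
def IsArborescence (src tgt : E → V) (s : V) (T : Finset E) : Prop :=
  ∀ v : V, ∃! l : List E, (∀ e ∈ l, e ∈ T) ∧ IsPath src tgt l s v

/-- The edge `e ∉ T` is externally active for the arborescence `T` (w.r.t. the linear
order on `E`): where `P₁`, `P₂` are the two edge-disjoint directed paths in `T ∪ {e}`
sharing their starting vertex and ending at `tgt e`, with `e ∈ P₁`, the smallest edge
on `P₁ ++ P₂` lies on `P₁`. -/
def ExtActive [LinearOrder E] (src tgt : E → V) (T : Finset E) (e : E) : Prop :=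
  e ∉ T ∧ ∃ (u : V) (p₁ p₂ : List E),
    (∀ f ∈ p₁, f ∈ T ∨ f = e) ∧ (∀ f ∈ p₂, f ∈ T ∨ f = e) ∧
    IsPath src tgt p₁ u (tgt e) ∧ IsPath src tgt p₂ u (tgt e) ∧
    e ∈ p₁ ∧ (∀ f ∈ p₁, f ∉ p₂) ∧
    ∃ fmin ∈ p₁, ∀ f ∈ p₁ ++ p₂, fmin ≤ f

/-- The external activity `e(T)` of an arborescence `T`. -/
noncomputable def extActivity [LinearOrder E] (src tgt : E → V) (T : Finset E) : ℕ :=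
  Nat.card {e : E // ExtActive src tgt T e}

/-- The greedoid Tutte polynomial `T(G,s;y) = Σ_{T ∈ A(G,s)} y^{e(T)}`. -/
noncomputable def greedoidTutte [LinearOrder E] (src tgt : E → V) (s : V) : Polynomial ℤ :=
  ∑ᶠ T : {T : Finset E // IsArborescence src tgt s T}, X ^ extActivity src tgt T.1

/-- `f` is a `G^r`-parking function rooted at `s`. -/
def IsParking (src tgt : E → V) (s : V) (f : {v : V // v ≠ s} → ℕ) : Prop :=
  ∀ A : Finset {v : V // v ≠ s}, A.Nonempty →
    ∃ v ∈ A, f v < Nat.card {e : E // (∀ w ∈ A, src e ≠ w.1) ∧ tgt e = v.1}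

/-- The d-level of a `G^r`-parking function: `|E| − |V| + 1 − Σ_{v≠s} f(v)`. -/
noncomputable def parkDlvl (src : E → V) (s : V) (f : {v : V // v ≠ s} → ℕ) : ℕ :=
  ((Fintype.card E : ℤ) - Fintype.card V + 1 - ∑ v : {v : V // v ≠ s}, (f v : ℤ)).toNat

/-- `σ` is an s-decreasing traversal: a sequence in which every vertex and edge of `G`
appears exactly once, satisfying (R1) every vertex other than `s` is immediately
preceded by an edge targeting it, and (R2) every edge is the `<ₑ`-maximum edge not yet
seen whose source has been seen. -/
def IsTraversal [LinearOrder E] (src tgt : E → V) (s : V) (σ : List (V ⊕ E)) : Prop :=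
  σ.Nodup ∧ (∀ x : V ⊕ E, x ∈ σ) ∧
  (∀ (i : ℕ) (hi : i < σ.length) (v : V),
      σ.get ⟨i, hi⟩ = Sum.inl v → v ≠ s →
      0 < i ∧ ∃ e : E, tgt e = v ∧ σ.get ⟨i - 1, by omega⟩ = Sum.inr e) ∧
  (∀ (i : ℕ) (hi : i < σ.length) (e : E),
      σ.get ⟨i, hi⟩ = Sum.inr e →
      Sum.inl (src e) ∈ σ.take i ∧
      ∀ f : E, Sum.inr f ∉ σ.take i → Sum.inl (src f) ∈ σ.take i → f ≤ e)

open scoped Classical in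
/-- `Υ(σ)`: the set of edges immediately preceding a non-sink vertex in `σ`. -/
noncomputable def Upsilon (src tgt : E → V) (s : V) (σ : List (V ⊕ E)) : Finset E :=
  Finset.univ.filter fun e =>
    ∃ (i : ℕ) (hi : i < σ.length) (v : V), v ≠ s ∧ σ.get ⟨i, hi⟩ = Sum.inl v ∧
      0 < i ∧ ∃ hj : i - 1 < σ.length, σ.get ⟨i - 1, hj⟩ = Sum.inr e

/-- The strength of `σ`: the number of strong edges, i.e. edges whose target appears
before them in `σ`. -/
noncomputable def strength (tgt : E → V) (σ : List (V ⊕ E)) : ℕ :=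
  Nat.card {e : E // ∃ (i : ℕ) (hi : i < σ.length),
    σ.get ⟨i, hi⟩ = Sum.inr e ∧ Sum.inl (tgt e) ∈ σ.take i}

/-- `Ψ(σ)(v)`: one less than the number of edges targeting `v` that appear before the
vertex `v` in `σ`. -/
def Psi (tgt : E → V) (s : V) (σ : List (V ⊕ E)) : {v : V // v ≠ s} → ℕ :=
  fun v =>
    (((σ.takeWhile fun x => x ≠ Sum.inl v.1).filterMap Sum.getRight?).filter
      fun e => tgt e = v.1).length - 1

/-! ### Helper material -/

/-- Legality of a list of firings. -/
def Legal (src tgt : E → V) : List V → (V → ℕ) → Prop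
  | [], _ => True
  | v :: l, c => outdeg src v ≤ c v ∧ Legal src tgt l (fire src tgt c v)

theorem fire_cast (src tgt : E → V) (c : V → ℕ) (v w : V) (h : outdeg src v ≤ c v) :
    (fire src tgt c v w : ℤ) =
      c w + numEdges src tgt v w - (if w = v then (outdeg src v : ℤ) else 0) := by
  unfold fire
  split_ifs with hw
  · subst hw; omega
  · omega

theorem le_fire (src tgt : E → V) (c : V → ℕ) (v w : V) (hw : w ≠ v) :
    c w ≤ fire src tgt c v w := by
  simp [fire, hw]

theorem fire_comm (src tgt : E → V) (c : V → ℕ) (u v : V) (huv : u ≠ v)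
    (hu : outdeg src u ≤ c u) (hv : outdeg src v ≤ c v) :
    fire src tgt (fire src tgt c u) v = fire src tgt (fire src tgt c v) u := by
  funext w
  have h1 := fire_cast src tgt c u w hu
  have h2 := fire_cast src tgt c v w hv
  have h3 := fire_cast src tgt (fire src tgt c u) v w (hv.trans (le_fire _ _ _ _ _ huv.symm))
  have h4 := fire_cast src tgt (fire src tgt c v) u w (hu.trans (le_fire _ _ _ _ _ huv))
  omega

theorem legal_erase (src tgt : E → V) (v : V) (l : List V) : ∀ c : V → ℕ,
    outdeg src v ≤ c v → Legal src tgt l c → Legal src tgt (l.erase v) (fire src tgt c v) := by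
  induction l with
  | nil => intro c _ _; trivial
  | cons u l ih =>
    intro c hv hl
    by_cases huv : u = v
    · subst huv; simpa using hl.2
    · rw [List.erase_cons_tail (by simpa using huv)]
      refine ⟨hl.1.trans (le_fire _ _ _ _ _ huv), ?_⟩
      rw [← fire_comm src tgt c u v huv hl.1 hv]
      exact ih _ (hv.trans (le_fire _ _ _ _ _ (Ne.symm huv))) hl.2

theorem legal_diff (src tgt : E → V) (t : List V) : ∀ (l : List V) (c : V → ℕ),
    Legal src tgt t c → Legal src tgt l c → Legal src tgt (l.diff t) (iterFire src tgt c t) := by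
  induction t with
  | nil => intro l c _ h; simpa [iterFire] using h
  | cons v t ih =>
    intro l c ht hl
    rw [List.diff_cons]
    exact ih _ _ ht.2 (legal_erase src tgt v l c ht.1 hl)

theorem legal_append (src tgt : E → V) (a b : List V) : ∀ c : V → ℕ,
    Legal src tgt (a ++ b) c ↔ Legal src tgt a c ∧ Legal src tgt b (iterFire src tgt c a) := by
  induction a with
  | nil => intro c; simp [Legal, iterFire]
  | cons v a ih =>
    intro c
    simp only [List.cons_append, Legal, ih, and_assoc]
    rfl

theorem iterFire_append (src tgt : E → V) (a b : List V) (c : V → ℕ) :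
    iterFire src tgt c (a ++ b) = iterFire src tgt (iterFire src tgt c a) b := by
  simp [iterFire, List.foldl_append]

theorem iterFire_cast (src tgt : E → V) (l : List V) : ∀ (c : V → ℕ), Legal src tgt l c →
    ∀ w, (iterFire src tgt c l w : ℤ) =
      c w - lapApply src tgt (fun v => ((l.count v : ℕ) : ℤ)) w := by
  induction l with
  | nil => intro c _ w; simp [iterFire, lapApply]
  | cons v l ih =>
    intro c hl w
    have h1 := ih _ hl.2 w
    have h2 := fire_cast src tgt c v w hl.1
    change (iterFire src tgt (fire src tgt c v) l w : ℤ) = _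
    rw [h1, h2]
    have : ∀ u, (((v :: l).count u : ℕ) : ℤ) = (l.count u : ℤ) + if u = v then 1 else 0 := by
      intro u
      rw [List.count_cons]
      by_cases huv : u = v
      · simp [huv]
      · simp [huv, Ne.symm huv]
    simp only [lapApply, this, mul_add, Finset.sum_add_distrib, mul_ite, mul_one, mul_zero,
      Finset.sum_ite_eq', Finset.mem_univ, if_true]
    split_ifs with hw
    · subst hw; ring
    · ring

theorem iterFire_of_lap (src tgt : E → V) (l : List V) (c : V → ℕ) (hl : Legal src tgt l c)
    (h0 : lapApply src tgt (fun v => ((l.count v : ℕ) : ℤ)) = 0) :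
    iterFire src tgt c l = c := by
  funext w
  have := iterFire_cast src tgt l c hl w
  rw [h0] at this
  simpa using this

theorem reach_of_legal (src tgt : E → V) (l : List V) : ∀ c : V → ℕ, Legal src tgt l c →
    Reach src tgt c (iterFire src tgt c l) := by
  induction l with
  | nil => intro c _; exact Relation.ReflTransGen.refl
  | cons v l ih =>
    intro c hl
    exact Relation.ReflTransGen.head ⟨v, hl.1, rfl⟩ (ih _ hl.2)

theorem legal_of_reach (src tgt : E → V) (c d : V → ℕ) (h : Reach src tgt c d) :
    ∃ l, Legal src tgt l c ∧ iterFire src tgt c l = d := by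
  induction h using Relation.ReflTransGen.head_induction_on with
  | refl => exact ⟨[], trivial, rfl⟩
  | head h1 _ ih =>
    obtain ⟨v, hv, rfl⟩ := h1
    obtain ⟨l, hl, hd⟩ := ih
    exact ⟨v :: l, ⟨hv, hl⟩, hd⟩

theorem legal_of_big (src tgt : E → V) (l : List V) : ∀ c : V → ℕ,
    (∀ v, outdeg src v * l.count v ≤ c v) → Legal src tgt l c := by
  induction l with
  | nil => intro c _; trivial
  | cons v l ih =>
    intro c h
    have hv := h v
    rw [List.count_cons_self, mul_add, mul_one] at hv
    refine ⟨by omega, ih _ fun u => ?_⟩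
    by_cases huv : u = v
    · subst huv
      simp only [fire, if_true]
      omega
    · have := h u
      rw [List.count_cons_of_ne (Ne.symm huv)] at this
      exact this.trans (le_fire _ _ _ _ _ huv)

theorem legal_of_agree (src tgt : E → V) (s : V) (l : List V) : ∀ c c' : V → ℕ, s ∉ l →
    (∀ v, v ≠ s → c v = c' v) → Legal src tgt l c → Legal src tgt l c' := by
  induction l with
  | nil => intro c c' _ _ _; trivial
  | cons v l ih =>
    intro c c' hs hc hl
    have hvs : v ≠ s := fun h => hs (by simp [h])
    refine ⟨(hc v hvs) ▸ hl.1, ih _ _ (fun h => hs (by simp [h])) ?_ hl.2⟩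
    intro w hw
    simp [fire, hc w hw]

theorem exists_list_count (r : V → ℕ) : ∃ l : List V, ∀ v, l.count v = r v := by
  refine ⟨(∑ v : V, r v • ({v} : Multiset V)).toList, fun v => ?_⟩
  rw [← Multiset.coe_count, Multiset.coe_toList, Multiset.count_sum']
  simp [Multiset.count_singleton]

theorem recurrent_of_loop (src tgt : E → V) (r : V → ℕ) (hr : IsPeriodVector src tgt r)
    (c : V → ℕ) (hc : ¬ Stable src c) (l : List V) (hl : Legal src tgt l c)
    (hcount : ∀ v, l.count v = r v) : Recurrent src tgt c := by
  refine ⟨hc, fun d hd => ?_⟩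
  obtain ⟨t, ht, rfl⟩ := legal_of_reach src tgt c d hd
  have hlap : ∀ k : ℕ, lapApply src tgt (fun v => ((k * r v : ℕ) : ℤ)) = 0 := by
    intro k
    funext w
    have h0 := congrFun hr.2.2.1 w
    simp only [lapApply, Pi.zero_apply] at h0 ⊢
    have : ∑ x, (numEdges src tgt x w : ℤ) * ((k * r x : ℕ) : ℤ)
        = k * ∑ x, (numEdges src tgt x w : ℤ) * (r x : ℤ) := by
      rw [Finset.mul_sum]
      refine Finset.sum_congr rfl fun x _ => ?_
      push_cast; ring
    rw [this]
    push_cast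
    linear_combination (k : ℤ) * h0
  have hpow : ∀ k : ℕ, ∃ L : List V, Legal src tgt L c ∧ ∀ v, L.count v = k * r v := by
    intro k
    induction k with
    | zero => exact ⟨[], trivial, by simp⟩
    | succ k ih =>
      obtain ⟨L, hL, hLc⟩ := ih
      have hLe : iterFire src tgt c L = c :=
        iterFire_of_lap src tgt L c hL (by simp only [hLc]; exact hlap k)
      refine ⟨L ++ l, (legal_append ..).2 ⟨hL, by rwa [hLe]⟩, fun v => ?_⟩
      rw [List.count_append, hLc, hcount]; ring
  obtain ⟨L, hL, hLc⟩ := hpow t.length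
  have hD := legal_diff src tgt t L c ht hL
  have hall : Legal src tgt (t ++ L.diff t) c := (legal_append ..).2 ⟨ht, hD⟩
  have hcc : ∀ v, (t ++ L.diff t).count v = t.length * r v := by
    intro v
    rw [List.count_append, List.count_diff, hLc]
    have h1 : t.count v ≤ t.length := List.count_le_length
    have h2 : t.length * 1 ≤ t.length * r v := Nat.mul_le_mul_left _ (hr.1 v)
    omega
  have he : iterFire src tgt c (t ++ L.diff t) = c :=
    iterFire_of_lap src tgt _ c hall (by simp only [hcc]; exact hlap _)
  have := reach_of_legal src tgt _ _ hD
  rwa [← iterFire_append, he] at this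

theorem lift_sreach (src tgt : E → V) (s : V) (x d : {v : V // v ≠ s} → ℕ)
    (h : SReach src tgt s x d) : ∀ k : ℕ, ∃ (t : List V) (m : ℕ), s ∉ t ∧
      Legal src tgt t (extendS s x + k • deltaS s) ∧
      iterFire src tgt (extendS s x + k • deltaS s) t = extendS s d + (k + m) • deltaS s := by
  induction h using Relation.ReflTransGen.head_induction_on with
  | refl => intro k; exact ⟨[], 0, by simp, trivial, rfl⟩
  | head h1 _ ih =>
    rename_i a b _
    intro k
    obtain ⟨v, hv, rfl⟩ := h1
    obtain ⟨t, m, hs, hl, he⟩ := ih (k + numEdges src tgt v.1 s)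
    have hf : fire src tgt (extendS s a + k • deltaS s) v.1 =
        extendS s (sfire src tgt s a v) + (k + numEdges src tgt v.1 s) • deltaS s := by
      funext w
      by_cases hw : w = s
      · subst hw
        simp [fire, extendS, deltaS, Ne.symm v.2]
      · simp [fire, extendS, deltaS, hw, sfire, Subtype.ext_iff]
    refine ⟨v.1 :: t, numEdges src tgt v.1 s + m, ?_, ⟨?_, ?_⟩, ?_⟩
    · simp [hs, Ne.symm v.2]
    · simpa [extendS, deltaS, v.2] using hv
    · rw [hf]; exact hl
    · change iterFire src tgt (fire src tgt (extendS s a + k • deltaS s) v.1) t = _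
      rw [hf, he, add_assoc]

theorem exists_rank (src tgt : E → V) (hG : StronglyConnected src tgt) (s : V) :
    ∃ rk : V → ℕ, rk s = 0 ∧ ∀ v, v ≠ s → ∃ e, src e = v ∧ rk (tgt e) < rk v := by
  classical
  have hw : ∀ v, ∃ n, ∃ l, IsWalk src tgt l v s ∧ l.length = n := by
    intro v
    have := hG v s
    induction this using Relation.ReflTransGen.head_induction_on with
    | refl => exact ⟨0, [], rfl, rfl⟩
    | head h1 _ ih =>
      obtain ⟨e, rfl, rfl⟩ := h1
      obtain ⟨n, l, hl, _⟩ := ih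
      exact ⟨_, e :: l, ⟨rfl, hl⟩, rfl⟩
  refine ⟨fun v => Nat.find (hw v), ?_, fun v hv => ?_⟩
  · exact Nat.eq_zero_of_le_zero (Nat.find_min' (hw s) ⟨[], rfl, rfl⟩)
  · obtain ⟨l, hl, hlen⟩ := Nat.find_spec (hw v)
    cases l with
    | nil => exact absurd hl hv
    | cons e l =>
      refine ⟨e, hl.1, ?_⟩
      have : Nat.find (hw (tgt e)) ≤ l.length := Nat.find_min' _ ⟨l, hl.2, rfl⟩
      simp only [List.length_cons] at hlen
      change Nat.find (hw (tgt e)) < Nat.find (hw v)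
      omega

theorem sum_numEdges (src tgt : E → V) (v : V) (h : V → ℤ) :
    ∑ w, (numEdges src tgt v w : ℤ) * h w =
      ∑ e ∈ Finset.univ.filter (fun e => src e = v), h (tgt e) := by
  rw [← Finset.sum_fiberwise (Finset.univ.filter (fun e => src e = v)) tgt]
  refine Finset.sum_congr rfl fun w _ => ?_
  rw [Finset.filter_filter]
  rw [Finset.sum_congr rfl (g := fun _ => h w) (fun e he => by rw [(Finset.mem_filter.1 he).2.2])]
  simp [numEdges]

theorem exists_weight (src tgt : E → V) (hG : StronglyConnected src tgt) (s : V) :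
    ∃ h : V → ℤ, h s = 0 ∧ (∀ v, 0 ≤ h v) ∧ ∀ v, v ≠ s →
      ∑ w, (numEdges src tgt v w : ℤ) * h w < (outdeg src v : ℤ) * h v := by
  obtain ⟨rk, h0, hrk⟩ := exists_rank src tgt hG s
  set n := ∑ v, rk v with hn
  have hle : ∀ v, rk v ≤ n := fun v =>
    Finset.single_le_sum (f := rk) (fun _ _ => Nat.zero_le _) (Finset.mem_univ v)
  set M : ℤ := (Fintype.card E : ℤ) + 2 with hM
  have hM1 : 1 ≤ M := by omega
  refine ⟨fun v => M ^ n - M ^ (n - rk v), by simp [h0], fun v => ?_, fun v hv => ?_⟩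
  · exact sub_nonneg.2 (pow_le_pow_right₀ hM1 (Nat.sub_le _ _))
  · rw [sum_numEdges]
    set S := Finset.univ.filter (fun e => src e = v) with hS
    have hdeg : (outdeg src v : ℤ) = S.card := rfl
    obtain ⟨e, he, hlt⟩ := hrk v hv
    have heS : e ∈ S := by simp [hS, he]
    have hpos : ∀ k, 0 < M ^ k := fun k => pow_pos (by omega) k
    have h1 : M ^ (n - rk v + 1) ≤ M ^ (n - rk (tgt e)) :=
      pow_le_pow_right₀ hM1 (by have := hle v; omega)
    have h2 : M ^ (n - rk (tgt e)) ≤ ∑ f ∈ S, M ^ (n - rk (tgt f)) :=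
      Finset.single_le_sum (f := fun f => M ^ (n - rk (tgt f))) (fun f _ => (hpos _).le) heS
    have hcard : (S.card : ℤ) ≤ Fintype.card E := by exact_mod_cast Finset.card_le_univ S
    have h3 : (S.card : ℤ) * M ^ (n - rk v) < M ^ (n - rk v + 1) := by
      rw [pow_succ, mul_comm]
      exact mul_lt_mul_of_pos_left (by omega) (hpos _)
    rw [Finset.sum_sub_distrib, Finset.sum_const, nsmul_eq_mul, hdeg]
    linarith

theorem exists_stab (src tgt : E → V) (hG : StronglyConnected src tgt) (s : V)
    (x : {v : V // v ≠ s} → ℕ) : ∃ d, SReach src tgt s x d ∧ SStable src s d := by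
  obtain ⟨h, hs, hnn, hlt⟩ := exists_weight src tgt hG s
  have key : ∀ (N : ℕ) (x : {v : V // v ≠ s} → ℕ), ∑ v, (x v : ℤ) * h v.1 ≤ N →
      ∃ d, SReach src tgt s x d ∧ SStable src s d := by
    intro N
    induction N with
    | zero =>
      intro x hx
      by_cases hst : SStable src s x
      · exact ⟨x, Relation.ReflTransGen.refl, hst⟩
      · exfalso
        obtain ⟨v, hv⟩ := not_forall.1 hst
        have hv := not_lt.1 hv
        have h1 : (x v : ℤ) * h v.1 ≤ ∑ v, (x v : ℤ) * h v.1 :=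
          Finset.single_le_sum (f := fun v : {v : V // v ≠ s} => (x v : ℤ) * h v.1)
            (fun u _ => mul_nonneg (by positivity) (hnn _)) (Finset.mem_univ v)
        have h2 := hlt v.1 v.2
        have h3 : 0 ≤ ∑ w, (numEdges src tgt v.1 w : ℤ) * h w :=
          Finset.sum_nonneg fun w _ => mul_nonneg (by positivity) (hnn _)
        have h4 : (outdeg src v.1 : ℤ) * h v.1 ≤ (x v : ℤ) * h v.1 :=
          mul_le_mul_of_nonneg_right (by exact_mod_cast hv) (hnn _)
        push_cast at hx
        linarith
    | succ N ih =>
      intro x hx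
      by_cases hst : SStable src s x
      · exact ⟨x, Relation.ReflTransGen.refl, hst⟩
      · obtain ⟨v, hv⟩ := not_forall.1 hst
        have hv := not_lt.1 hv
        have hsub : ∑ w : {v : V // v ≠ s}, (numEdges src tgt v.1 w.1 : ℤ) * h w.1 =
            ∑ w, (numEdges src tgt v.1 w : ℤ) * h w := by
          rw [← Fintype.sum_subtype_add_sum_subtype (fun w => w ≠ s)
            (fun w => (numEdges src tgt v.1 w : ℤ) * h w)]
          rw [left_eq_add]
          refine Finset.sum_eq_zero fun w _ => ?_
          have : w.1 = s := not_not.1 w.2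
          rw [this, hs, mul_zero]
        have hcast : ∀ w, (sfire src tgt s x v w : ℤ) =
            x w + numEdges src tgt v.1 w.1 - (if w = v then (outdeg src v.1 : ℤ) else 0) := by
          intro w
          unfold sfire
          split_ifs with hw
          · subst hw; omega
          · omega
        obtain ⟨d, hd, hds⟩ := ih (sfire src tgt s x v) (by
          simp only [hcast, sub_mul, add_mul, Finset.sum_sub_distrib, Finset.sum_add_distrib,
            ite_mul, zero_mul, Finset.sum_ite_eq', Finset.mem_univ, if_true]
          rw [hsub]
          have h2 := hlt v.1 v.2
          push_cast at hx
          linarith)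
        exact ⟨d, Relation.ReflTransGen.head ⟨v, hv, rfl⟩ hd, hds⟩
  exact key (∑ v, (x v : ℤ) * h v.1).toNat x (Int.self_le_toNat _)

/-- If `ĉ` is s-recurrent then `c̄ + (deg⁺(s)·r(s))·δ_s` is a recurrent
configuration of the sinkless model. -/
theorem extend_sRecurrent_recurrent [Nonempty V] (src tgt : E → V)
    (hG : StronglyConnected src tgt) (s : V) (r : V → ℕ)
    (hr : IsPeriodVector src tgt r) (ch : {v : V // v ≠ s} → ℕ)
    (h : SRecurrent src tgt s ch) :
    Recurrent src tgt (extendS s ch + (outdeg src s * r s) • deltaS s) := by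
  obtain ⟨c₂, hc₂⟩ := h (fun v => outdeg src v.1 * r v.1)
  set x := (fun v : {v : V // v ≠ s} => outdeg src v.1 * r v.1) + c₂ with hx
  have hreach : SReach src tgt s x ch := by
    have := Classical.epsilon_spec (exists_stab src tgt hG s x)
    rw [← hc₂]
    exact this.1
  set K := outdeg src s * r s with hK
  obtain ⟨t, m, hst, ht, hte⟩ := lift_sreach src tgt s x ch hreach K
  obtain ⟨R, hR⟩ := exists_list_count r
  have hRl : Legal src tgt R (extendS s x + K • deltaS s) := by
    refine legal_of_big _ _ _ _ fun v => ?_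
    rw [hR]
    by_cases hv : v = s
    · subst hv; simp [deltaS, hK]
    · simp [extendS, hv, hx, Nat.le_add_right, add_assoc]
  have hRe : iterFire src tgt (extendS s x + K • deltaS s) R = extendS s x + K • deltaS s :=
    iterFire_of_lap _ _ _ _ hRl (by simp only [hR]; exact hr.2.2.1)
  have hRt : Legal src tgt (R ++ t) (extendS s x + K • deltaS s) :=
    (legal_append ..).2 ⟨hRl, by rwa [hRe]⟩
  have hσ := legal_diff src tgt t (R ++ t) _ ht hRt
  rw [hte] at hσ
  set σ := (R ++ t).diff t with hσd
  have hσc : ∀ v, σ.count v = r v := by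
    intro v
    rw [hσd, List.count_diff, List.count_append, hR]; omega
  have hS : ∀ k, K ≤ k → Legal src tgt (List.replicate (r s) s) (extendS s ch + k • deltaS s) := by
    intro k hk
    refine legal_of_big _ _ _ _ fun v => ?_
    by_cases hv : v = s
    · subst hv; simpa [deltaS, extendS, hK] using hk
    · simp [List.count_replicate, hv, Ne.symm hv]
  have hρ := legal_diff src tgt _ _ _ (hS (K + m) (Nat.le_add_right _ _)) hσ
  set ρ := σ.diff (List.replicate (r s) s) with hρd
  have hρs : s ∉ ρ := by
    rw [← List.count_eq_zero, hρd, List.count_diff, hσc]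
    simp
  have hρ' : Legal src tgt ρ
      (iterFire src tgt (extendS s ch + K • deltaS s) (List.replicate (r s) s)) := by
    refine legal_of_agree src tgt s ρ _ _ hρs (fun v hv => ?_) hρ
    have h1 := iterFire_cast _ _ _ _ (hS (K + m) (Nat.le_add_right _ _)) v
    have h2 := iterFire_cast _ _ _ _ (hS K le_rfl) v
    have h3 : (extendS s ch + (K + m) • deltaS s) v = (extendS s ch + K • deltaS s) v := by
      simp [deltaS, hv]
    rw [h3] at h1
    omega
  refine recurrent_of_loop src tgt r hr _ ?_ (List.replicate (r s) s ++ ρ)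
    ((legal_append ..).2 ⟨hS K le_rfl, hρ'⟩) ?_
  · intro hstab
    have h1 := hstab s
    have h2 : outdeg src s * 1 ≤ outdeg src s * r s := Nat.mul_le_mul_left _ (hr.1 s)
    simp [extendS, deltaS, hK] at h1
    omega
  · intro v
    rw [List.count_append, hρd, List.count_diff, hσc]
    by_cases hv : v = s
    · subst hv; simp
    · simp [List.count_replicate, Ne.symm hv]

end SandpileBM
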